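/- Let U : ℝ^d → ℝ be differentiable with L-Lipschitz gradient and unique global minimizer θ*, and let β > 0. Let π_θ be the Gibbs measure with density ρ(θ) = exp(-βU(θ))/Z_β, and suppose ∫ ‖θ‖² dπ_θ(θ) ≤ C_β/β with θ* = 0. Then Ū_β - U(θ*) ≤ (d/(2β)) log(e·C_β·L/d), where Ū_β = ∫ U dπ_θ. -/

import Mathlib

open Real MeasureTheory

/-!
Write `V = β U` and let `P` be the Gibbs measure with density `exp (-V) / Z`. Its entropy is
`log Z + ∫ V ∂P`. Since `g ↦ log ∫ exp g` is convex with derivative `h ↦ ∫ h ∂P` at `g = -V`,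
comparing `-V` with the exponent `-c ‖x‖ ^ 2` of a Gaussian of the same second moment bounds this
entropy by that of the Gaussian. On the other hand `U` lies below the parabola
`U 0 + L / 2 * ‖x‖ ^ 2`, so `Z` is at least a Gaussian integral. Subtracting the two bounds, the
factors `π` cancel and `β (∫ U ∂P - U 0)` is what remains.
-/

section QuadraticUpperBound

theorem norm_sub_sub_fderiv_le_of_lipschitz {E F : Type*} [NormedAddCommGroup E] [NormedSpace ℝ E]
    [NormedAddCommGroup F] [NormedSpace ℝ F] {f : E → F} {L : ℝ} {x : E}
    (hf : Differentiable ℝ f) (hlip : ∀ y, ‖fderiv ℝ f y - fderiv ℝ f x‖ ≤ L * ‖y - x‖) (y : E) :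
    ‖f y - f x - fderiv ℝ f x (y - x)‖ ≤ L / 2 * ‖y - x‖ ^ 2 := by
  set v := y - x with hv
  let remainder : ℝ → F := fun t => f (x + t • v) - f x - t • fderiv ℝ f x v
  have hderiv (t : ℝ) :
      HasDerivAt remainder ((fderiv ℝ f (x + t • v) - fderiv ℝ f x) v) t := by
    have hline : HasDerivAt (fun s : ℝ => x + s • v) v t := by
      simpa using ((hasDerivAt_id t).smul_const v).const_add x
    have hlinear : HasDerivAt (fun s : ℝ => s • fderiv ℝ f x v) (fderiv ℝ f x v) t := by
      simpa using (hasDerivAt_id t).smul_const (fderiv ℝ f x v)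
    exact (((hf _).hasFDerivAt.comp_hasDerivAt t hline).sub_const (f x)).sub hlinear
  have hparabola (t : ℝ) :
      HasDerivAt (fun s : ℝ => L / 2 * ‖v‖ ^ 2 * s ^ 2) (L * t * ‖v‖ ^ 2) t :=
    ((hasDerivAt_pow 2 t).const_mul (L / 2 * ‖v‖ ^ 2)).congr_deriv (by push_cast; ring)
  have hbound (t : ℝ) (ht : t ∈ Set.Ico (0 : ℝ) 1) :
      ‖(fderiv ℝ f (x + t • v) - fderiv ℝ f x) v‖ ≤ L * t * ‖v‖ ^ 2 :=
    calc ‖(fderiv ℝ f (x + t • v) - fderiv ℝ f x) v‖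
        ≤ ‖fderiv ℝ f (x + t • v) - fderiv ℝ f x‖ * ‖v‖ := ContinuousLinearMap.le_opNorm _ _
      _ ≤ L * ‖x + t • v - x‖ * ‖v‖ := by gcongr; exact hlip _
      _ = L * t * ‖v‖ ^ 2 := by
        rw [add_sub_cancel_left, norm_smul, norm_of_nonneg ht.1]; ring
  have h : ‖remainder 1‖ ≤ L / 2 * ‖v‖ ^ 2 * 1 ^ 2 :=
    image_norm_le_of_norm_deriv_right_le_deriv_boundary
      (fun t _ => (hderiv t).continuousAt.continuousWithinAt)
      (fun t _ => (hderiv t).hasDerivWithinAt) (by simp [remainder]) hparabola hbound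
      (Set.right_mem_Icc.2 zero_le_one)
  simpa [remainder, hv] using h

theorem le_add_sq_norm_of_isLocalMin_of_gradient_lipschitz {E : Type*} [NormedAddCommGroup E]
    [InnerProductSpace ℝ E] [CompleteSpace E] {f : E → ℝ} {L : ℝ} {x₀ : E}
    (hmin : IsLocalMin f x₀) (hf : Differentiable ℝ f)
    (hlip : ∀ x, ‖gradient f x - gradient f x₀‖ ≤ L * ‖x - x₀‖) (x : E) :
    f x ≤ f x₀ + L / 2 * ‖x - x₀‖ ^ 2 := by
  have hlip' (y : E) : ‖fderiv ℝ f y - fderiv ℝ f x₀‖ ≤ L * ‖y - x₀‖ := by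
    rw [← toDual_gradient, ← toDual_gradient, ← map_sub, LinearIsometryEquiv.norm_map]
    exact hlip y
  have h := (le_abs_self _).trans (norm_sub_sub_fderiv_le_of_lipschitz hf hlip' x)
  rw [hmin.fderiv_eq_zero, zero_apply, sub_zero] at h
  linarith

end QuadraticUpperBound

section Tilted

variable {α : Type*} [MeasurableSpace α] {μ : Measure α} {f g : α → ℝ}

theorem integral_tilted_eq_integral_mul (μ : Measure α) (f g : α → ℝ) :
    ∫ x, g x ∂(μ.tilted f) = ∫ x, g x * (exp (f x) / ∫ y, exp (f y) ∂μ) ∂μ := by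
  simp only [integral_tilted, smul_eq_mul, mul_comm]

theorem integrable_tilted_iff_integrable_mul (hf : Integrable (fun x => exp (f x)) μ) :
    Integrable g (μ.tilted f) ↔
      Integrable (fun x => g x * (exp (f x) / ∫ y, exp (f y) ∂μ)) μ := by
  rcases eq_zero_or_neZero μ with rfl | hμ
  · simp
  · have hZ : (∫ y, exp (f y) ∂μ)⁻¹ ≠ 0 := inv_ne_zero (integral_exp_pos hf).ne'
    rw [integrable_tilted_iff hf, ← integrable_mul_const_iff hZ.isUnit]
    simp only [smul_eq_mul, mul_comm (exp _), div_eq_mul_inv, mul_assoc]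

/-- The Gibbs–Bogoliubov inequality. -/
theorem integral_sub_tilted_le_log_integral_exp_sub (hf : Integrable (fun x => exp (f x)) μ)
    (hg : Integrable (fun x => exp (g x)) μ)
    (hfg : Integrable (fun x => g x - f x) (μ.tilted f)) :
    ∫ x, (g x - f x) ∂(μ.tilted f) ≤ log (∫ x, exp (g x) ∂μ) - log (∫ x, exp (f x) ∂μ) := by
  rcases eq_zero_or_neZero μ with rfl | hμ
  · simp
  have := isProbabilityMeasure_tilted hf
  have hexp : Integrable (fun x => exp (g x - f x)) (μ.tilted f) := by
    simpa [integrable_tilted_iff hf, ← exp_add] using hg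
  have hratio : ∫ x, exp (g x - f x) ∂(μ.tilted f) = (∫ x, exp (g x) ∂μ) / ∫ x, exp (f x) ∂μ := by
    simpa using integral_exp_tilted (μ := μ) f (g - f)
  rw [← log_div (integral_exp_pos hg).ne' (integral_exp_pos hf).ne', ← hratio,
    le_log_iff_exp_le (integral_exp_pos hexp)]
  exact convexOn_exp.map_integral_le continuous_exp.continuousOn isClosed_univ (by simp) hfg hexp

end Tilted

section Gaussian

open Module

variable {E : Type*} [NormedAddCommGroup E] [InnerProductSpace ℝ E] [FiniteDimensional ℝ E]
  [MeasurableSpace E] [BorelSpace E]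

theorem log_integral_exp_neg_mul_sq_norm_sub {b : ℝ} (hb : 0 < b) (x₀ : E) :
    log (∫ x, exp (-(b * ‖x - x₀‖ ^ 2))) = finrank ℝ E / 2 * log (π / b) := by
  simp only [← neg_mul]
  rw [integral_sub_right_eq_self (fun x => exp (-b * ‖x‖ ^ 2)),
    GaussianFourier.integral_rexp_neg_mul_sq_norm hb, log_rpow (by positivity)]

theorem integrable_exp_neg_mul_sq_norm_sub {b : ℝ} (hb : 0 < b) (x₀ : E) :
    Integrable (fun x : E => exp (-(b * ‖x - x₀‖ ^ 2))) := by
  have h : Integrable (fun x : E => exp (-b * ‖x‖ ^ 2)) := by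
    refine .of_integral_ne_zero ?_
    rw [GaussianFourier.integral_rexp_neg_mul_sq_norm hb]
    positivity
  simpa only [neg_mul] using h.comp_sub_right x₀

theorem le_log_integral_exp_neg_of_le_sq_norm_sub {V : E → ℝ} {b : ℝ} {x₀ : E} (hb : 0 < b)
    (hV : Integrable (fun x => exp (-V x))) (hle : ∀ x, V x ≤ V x₀ + b * ‖x - x₀‖ ^ 2) :
    -V x₀ + finrank ℝ E / 2 * log (π / b) ≤ log (∫ x, exp (-V x)) := by
  have hgauss := integrable_exp_neg_mul_sq_norm_sub hb x₀
  have hpos := integral_exp_pos hgauss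
  rw [← log_integral_exp_neg_mul_sq_norm_sub hb x₀, ← log_exp (-V x₀),
    ← log_mul (exp_pos _).ne' hpos.ne', ← integral_const_mul]
  refine log_le_log (by rw [integral_const_mul]; positivity)
    (integral_mono (hgauss.const_mul _) hV fun x => ?_)
  simp only [← exp_add]
  exact exp_le_exp.2 (by linarith [hle x])

/-- The left-hand side is the differential entropy of the probability density proportional to
`exp (-V)`, and the right-hand side that of the isotropic Gaussian with second moment `m`. -/
theorem log_integral_exp_neg_add_integral_tilted_le {V : E → ℝ} {m : ℝ} {y : E}
    (hE : 0 < finrank ℝ E) (hm : 0 < m) (hV : Integrable (fun x => exp (-V x)))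
    (hVint : Integrable V (volume.tilted fun x => -V x))
    (hmom_int : Integrable (fun x => ‖x - y‖ ^ 2) (volume.tilted fun x => -V x))
    (hmom : ∫ x, ‖x - y‖ ^ 2 ∂(volume.tilted fun x => -V x) ≤ m) :
    log (∫ x, exp (-V x)) + ∫ x, V x ∂(volume.tilted fun x => -V x) ≤
      finrank ℝ E / 2 * log (2 * π * exp 1 * m / finrank ℝ E) := by
  set n : ℝ := (finrank ℝ E : ℝ)
  have hn : 0 < n := Nat.cast_pos.2 hE
  -- The Gaussian `exp (-c * ‖x - y‖ ^ 2)` has second moment `n / (2 * c)`.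
  set c : ℝ := n / (2 * m)
  have hc : 0 < c := by positivity
  have hsq : Integrable (fun x => -(c * ‖x - y‖ ^ 2)) (volume.tilted fun x => -V x) :=
    (hmom_int.const_mul c).neg
  have hVneg : Integrable (fun x => -V x) (volume.tilted fun x => -V x) := hVint.neg
  have hgibbs := integral_sub_tilted_le_log_integral_exp_sub hV
    (integrable_exp_neg_mul_sq_norm_sub hc y) (hsq.sub hVneg)
  rw [integral_sub hsq hVneg, integral_neg, integral_neg, integral_const_mul,
    log_integral_exp_neg_mul_sq_norm_sub hc] at hgibbs
  have hcm : c * ∫ x, ‖x - y‖ ^ 2 ∂(volume.tilted fun x => -V x) ≤ n / 2 :=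
    calc c * ∫ x, ‖x - y‖ ^ 2 ∂(volume.tilted fun x => -V x) ≤ c * m := by gcongr
      _ = n / 2 := by simp only [c]; field_simp
  have hlog : log (2 * π * exp 1 * m / n) = 1 + log (π / c) := by
    rw [show 2 * π * exp 1 * m / n = exp 1 * (π / c) by simp only [c]; field_simp,
      log_mul (exp_pos 1).ne' (by positivity), log_exp]
  rw [hlog]
  linarith

theorem stmt_5_general (hE : 0 < finrank ℝ E) (U : E → ℝ) (x₀ y : E) (L β C : ℝ) (hL : 0 < L)
    (hβ : 0 < β) (hC : 0 < C) (hU : ∀ x, U x ≤ U x₀ + L / 2 * ‖x - x₀‖ ^ 2)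
    (hZ : Integrable (fun x => exp (-(β * U x)))) (ρ : E → ℝ)
    (hρ : ∀ x, ρ x = exp (-(β * U x)) / ∫ x, exp (-(β * U x)))
    (hUint : Integrable (fun x => U x * ρ x))
    (hmom_int : Integrable (fun x => ‖x - y‖ ^ 2 * ρ x))
    (hmom : ∫ x, ‖x - y‖ ^ 2 * ρ x ≤ C / β) :
    (∫ x, U x * ρ x) - U x₀ ≤
      finrank ℝ E / (2 * β) * log (exp 1 * C * L / finrank ℝ E) := by
  set n : ℝ := (finrank ℝ E : ℝ) with hn_def
  have hn : 0 < n := Nat.cast_pos.2 hE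
  simp only [hρ, ← integrable_tilted_iff_integrable_mul hZ, ← integral_tilted_eq_integral_mul]
    at hUint hmom_int hmom ⊢
  have hentropy := log_integral_exp_neg_add_integral_tilted_le (V := fun x => β * U x) hE
    (by positivity) hZ (hUint.const_mul β) hmom_int hmom
  rw [integral_const_mul, ← hn_def] at hentropy
  have hpartition : -(β * U x₀) + n / 2 * log (π / (β * L / 2)) ≤
      log (∫ x, exp (-(β * U x))) :=
    le_log_integral_exp_neg_of_le_sq_norm_sub (V := fun x => β * U x) (by positivity) hZ fun x => by
      linarith [mul_le_mul_of_nonneg_left (hU x) hβ.le]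
  have hlog : log (exp 1 * C * L / n) =
      log (2 * π * exp 1 * (C / β) / n) - log (π / (β * L / 2)) := by
    rw [← log_div (by positivity) (by positivity)]
    congr 1
    field_simp
  calc (∫ x, U x ∂(volume.tilted fun x => -(β * U x))) - U x₀
      ≤ n / 2 * log (exp 1 * C * L / n) / β := by
        rw [le_div_iff₀' hβ, hlog]
        linarith
    _ = n / (2 * β) * log (exp 1 * C * L / n) := by ring

end Gaussian

/-- Lemma 2 of the paper: for the Gibbs density ρ ∝ exp(-βU) with global
minimizer θ* = 0 and second moment ≤ C_β/β, the suboptimality of the mean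
energy satisfies Ū_β - U(0) ≤ (d/(2β)) log(e C_β L / d). -/
theorem stmt_5 {d : ℕ} (hd : 0 < d) (U : EuclideanSpace ℝ (Fin d) → ℝ)
    (L β Cβ : ℝ) (hL : 0 < L) (hβ : 0 < β) (hC : 0 < Cβ)
    (hdiff : Differentiable ℝ U)
    (hlip : ∀ θ θ' : EuclideanSpace ℝ (Fin d),
      ‖gradient U θ - gradient U θ'‖ ≤ L * ‖θ - θ'‖)
    (hmin : ∀ θ, U (0 : EuclideanSpace ℝ (Fin d)) ≤ U θ)
    (Zβ : ℝ)
    (hZ : Zβ = ∫ θ : EuclideanSpace ℝ (Fin d), Real.exp (-(β * U θ)))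
    (hZint : Integrable (fun θ : EuclideanSpace ℝ (Fin d) => Real.exp (-(β * U θ))))
    (ρ : EuclideanSpace ℝ (Fin d) → ℝ)
    (hρ : ∀ θ, ρ θ = Real.exp (-(β * U θ)) / Zβ)
    (hUint : Integrable (fun θ : EuclideanSpace ℝ (Fin d) => U θ * ρ θ))
    (hmom_int : Integrable (fun θ : EuclideanSpace ℝ (Fin d) => ‖θ‖ ^ 2 * ρ θ))
    (hmom : ∫ θ : EuclideanSpace ℝ (Fin d), ‖θ‖ ^ 2 * ρ θ ≤ Cβ / β) :
    (∫ θ : EuclideanSpace ℝ (Fin d), U θ * ρ θ) - U (0 : EuclideanSpace ℝ (Fin d)) ≤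
      (d : ℝ) / (2 * β) * Real.log (Real.exp 1 * Cβ * L / d) := by
  subst hZ
  simpa using stmt_5_general (by simpa using hd) U 0 0 L β Cβ hL hβ hC
    (le_add_sq_norm_of_isLocalMin_of_gradient_lipschitz (.of_forall hmin) hdiff (hlip · 0))
    hZint ρ hρ hUint (by simpa using hmom_int) (by simpa using hmom)
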